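/- arXiv:1602.04769 — 2 statements merged into one kernel-verified Lean document; each statement's English description precedes it below -/
import Mathlib

section
/- Let A and B be categories, let F : A ⥤ B be a functor admitting a right adjoint G : B ⥤ A. If there exists a natural isomorphism α : 𝟭_A ≅ F ⋙ G (α is not required to be the unit of the adjunction), then F is fully faithful. -/
open CategoryTheory

/-- Opposite version of Johnstone's Lemma 1.1.1: if `F` has a right adjoint `G` and the
identity functor of `A` is (abstractly) isomorphic to `F ⋙ G`, then `F` is fully faithful. -/
theorem full_and_faithful_of_iso_id_comp {A : Type*} {B : Type*} [Category A] [Category B]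
    (F : A ⥤ B) (G : B ⥤ A) (adj : F ⊣ G) (α : Functor.id A ≅ F ⋙ G) :
    F.Full ∧ F.Faithful := by
  have := adj.isIso_unit_of_iso α.symm
  have h := adj.fullyFaithfulLOfIsIsoUnit
  exact ⟨h.full, h.faithful⟩
end

section
/- Let R be a commutative ring and w ∈ R a nonzerodivisor. Then every factorization F = (F₁, F₀, φ₁, φ₀) of w over R admits a surjective morphism of factorizations p : E → F such that multiplication by w is injective on both components of E and on both components of the kernel of p. Explicitly, choosing free R-modules E₁, E₀ with surjections p₁ : E₁ ↠ F₁ and p₀ : E₀ ↠ F₀, the tuple E := (E₁ ⊕ E₀, E₁ ⊕ E₀, w•id_{E₁} ⊕ id_{E₀}, id_{E₁} ⊕ w•id_{E₀}) is a factorization of w, the pair given by (p₁ + φ₀∘p₀ on the first component, φ₁∘p₁ + p₀ on the second) is a surjective morphism E → F, and the components of E and of ker(p) are w-torsion-free. -/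
universe u

/-- A factorization of `w` over a commutative ring `R`. -/
structure Factorization (R : Type u) [CommRing R] (w : R) : Type (u + 1) where
  M1 : Type u
  M0 : Type u
  [acg1 : AddCommGroup M1]
  [acg0 : AddCommGroup M0]
  [mod1 : Module R M1]
  [mod0 : Module R M0]
  φ1 : M1 →ₗ[R] M0
  φ0 : M0 →ₗ[R] M1
  comp10 : φ0 ∘ₗ φ1 = w • LinearMap.id
  comp01 : φ1 ∘ₗ φ0 = w • LinearMap.id

attribute [instance] Factorization.acg1 Factorization.acg0 Factorization.mod1 Factorization.mod0

/-- A nonzerodivisor acts injectively on a free module. -/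
theorem smul_injective_of_free_aux {R : Type u} [CommRing R] {w : R}
    (hw : w ∈ nonZeroDivisors R) (E : Type u) [AddCommGroup E] [Module R E]
    [Module.Free R E] {x y : E} (h : w • x = w • y) : x = y := by
  apply (Module.Free.chooseBasis R E).repr.injective
  ext i
  have h2 := congrArg (fun z => (Module.Free.chooseBasis R E).repr z i) h
  simp only [map_smul, Finsupp.smul_apply, smul_eq_mul] at h2
  exact (mul_cancel_left_mem_nonZeroDivisors hw).1 h2

/-- **Affine content of the first paragraph of the proof of Lemma 3.10.**
If `w` is a nonzerodivisor, then every factorization `F` of `w` admits a surjection from a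
factorization with `w`-torsion-free components, whose kernel also has `w`-torsion-free
components.  Explicitly, choosing free modules `E₁, E₀` with surjections `p₁ : E₁ ↠ F₁` and
`p₀ : E₀ ↠ F₀`, the tuple `E := (E₁ ⊕ E₀, E₁ ⊕ E₀, φ₁ᴱ, φ₀ᴱ)` (where one structure map is
`w•id_{E₁} ⊕ id_{E₀}` and the other is `id_{E₁} ⊕ w•id_{E₀}`) is a factorization of `w`, the
pair `p = (p₁ + φ₀∘p₀, φ₁∘p₁ + p₀)` is a surjective morphism of factorizations `E → F`, and
the components of `E` and of `ker p` are `w`-torsion-free. -/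
theorem exists_wflat_resolution {R : Type u} [CommRing R] {w : R}
    (hw : w ∈ nonZeroDivisors R) (F : Factorization R w)
    (E1 E0 : Type u) [AddCommGroup E1] [AddCommGroup E0] [Module R E1] [Module R E0]
    [Module.Free R E1] [Module.Free R E0]
    (p1 : E1 →ₗ[R] F.M1) (p0 : E0 →ₗ[R] F.M0)
    (hp1 : Function.Surjective p1) (hp0 : Function.Surjective p0) :
    ∃ (φE1 φE0 : E1 × E0 →ₗ[R] E1 × E0)
      (f1 : E1 × E0 →ₗ[R] F.M1) (f0 : E1 × E0 →ₗ[R] F.M0),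
      -- the explicit structure maps of `E`
      φE1 = LinearMap.prodMap LinearMap.id (w • LinearMap.id) ∧
      φE0 = LinearMap.prodMap (w • LinearMap.id) LinearMap.id ∧
      -- the explicit components of `p`
      f1 = LinearMap.coprod p1 (F.φ0 ∘ₗ p0) ∧
      f0 = LinearMap.coprod (F.φ1 ∘ₗ p1) p0 ∧
      -- `E` is a factorization of `w`
      φE0 ∘ₗ φE1 = w • LinearMap.id ∧
      φE1 ∘ₗ φE0 = w • LinearMap.id ∧
      -- `p = (f1, f0)` is a morphism of factorizations `E → F`
      f0 ∘ₗ φE1 = F.φ1 ∘ₗ f1 ∧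
      f1 ∘ₗ φE0 = F.φ0 ∘ₗ f0 ∧
      -- `p` is surjective
      Function.Surjective f1 ∧
      Function.Surjective f0 ∧
      -- the components of `E` are `w`-torsion-free
      Function.Injective (fun v : E1 × E0 => w • v) ∧
      -- the components of `ker p` are `w`-torsion-free
      Function.Injective (fun v : ↥(LinearMap.ker f1) => w • v) ∧
      Function.Injective (fun v : ↥(LinearMap.ker f0) => w • v) := by
  have h10 : ∀ x, F.φ0 (F.φ1 x) = w • x := fun x => LinearMap.congr_fun F.comp10 x
  have h01 : ∀ x, F.φ1 (F.φ0 x) = w • x := fun x => LinearMap.congr_fun F.comp01 x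
  have hE : Function.Injective (fun v : E1 × E0 => w • v) := by
    intro a b h
    exact Prod.ext (smul_injective_of_free_aux hw E1 (congrArg Prod.fst h))
      (smul_injective_of_free_aux hw E0 (congrArg Prod.snd h))
  refine ⟨_, _, _, _, rfl, rfl, rfl, rfl, ?_, ?_, ?_, ?_, ?_, ?_, hE, ?_, ?_⟩
  · ext x <;> simp
  · ext x <;> simp
  · ext x <;> simp [h01]
  · ext x <;> simp [h10]
  · intro y
    obtain ⟨x, rfl⟩ := hp1 y
    exact ⟨(x, 0), by simp⟩
  · intro y
    obtain ⟨x, rfl⟩ := hp0 y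
    exact ⟨(0, x), by simp⟩
  · intro a b h
    exact Subtype.ext (hE (congrArg Subtype.val h))
  · intro a b h
    exact Subtype.ext (hE (congrArg Subtype.val h))
end
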